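/- arXiv:1312.7860 — 5 statements merged into one kernel-verified Lean document; each statement's English description precedes it below -/
import Mathlib

section
/- Let Φ : ℝ → ℝ be the standard normal CDF. If 0 ≤ k ≤ √(2π), then for every b ∈ ℝ the equation Φ(k·θ + b) = θ has exactly one real solution θ, and this solution lies in the open interval (0,1). -/
/-- The standard normal cumulative distribution function
`Φ(x) = ∫_{-∞}^{x} (2π)^{-1/2} exp(-t²/2) dt`. -/
noncomputable def stdNormalCDF (x : ℝ) : ℝ :=
  ∫ t in Set.Iic x, (Real.sqrt (2 * Real.pi))⁻¹ * Real.exp (-t ^ 2 / 2)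

noncomputable def gDens (t : ℝ) : ℝ := (Real.sqrt (2 * Real.pi))⁻¹ * Real.exp (-t ^ 2 / 2)

lemma gDens_cont : Continuous gDens := by unfold gDens; fun_prop

lemma sqrt_pos_aux : 0 < Real.sqrt (2 * Real.pi) := Real.sqrt_pos.2 (by positivity)

lemma gDens_pos (t : ℝ) : 0 < gDens t :=
  mul_pos (inv_pos.2 sqrt_pos_aux) (Real.exp_pos _)

lemma gDens_eq : gDens = ProbabilityTheory.gaussianPDFReal 0 1 := by
  funext t
  simp [gDens, ProbabilityTheory.gaussianPDFReal]

lemma gDens_int : MeasureTheory.Integrable gDens := by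
  rw [gDens_eq]; exact ProbabilityTheory.integrable_gaussianPDFReal 0 1

lemma gDens_total : ∫ t, gDens t = 1 := by
  rw [gDens_eq]; exact ProbabilityTheory.integral_gaussianPDFReal_eq_one 0 one_ne_zero

lemma cdf_def (x : ℝ) : stdNormalCDF x = ∫ t in Set.Iic x, gDens t := rfl

lemma cdf_sub (x y : ℝ) : stdNormalCDF y - stdNormalCDF x = ∫ t in x..y, gDens t := by
  rw [cdf_def, cdf_def]
  exact intervalIntegral.integral_Iic_sub_Iic gDens_int.integrableOn gDens_int.integrableOn

lemma cdf_strictMono : StrictMono stdNormalCDF := by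
  intro x y h
  have := intervalIntegral.intervalIntegral_pos_of_pos
    (gDens_cont.intervalIntegrable x y) gDens_pos h
  rw [← cdf_sub] at this
  linarith

lemma cdf_pos (x : ℝ) : 0 < stdNormalCDF x := by
  have h : 0 ≤ stdNormalCDF (x - 1) := by
    rw [cdf_def]
    exact MeasureTheory.integral_nonneg (fun t => (gDens_pos t).le)
  exact h.trans_lt (cdf_strictMono (by linarith))

lemma cdf_lt_one (x : ℝ) : stdNormalCDF x < 1 := by
  have h : stdNormalCDF (x + 1) ≤ 1 := by
    rw [cdf_def, ← gDens_total]
    exact MeasureTheory.setIntegral_le_integral gDens_int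
      (Filter.Eventually.of_forall fun t => (gDens_pos t).le)
  exact (cdf_strictMono (by linarith)).trans_le h

lemma cdf_cont : Continuous stdNormalCDF := by
  have h : stdNormalCDF = fun x => stdNormalCDF 0 + ∫ t in (0:ℝ)..x, gDens t := by
    funext x
    rw [← cdf_sub]; ring
  rw [h]
  exact continuous_const.add
    (intervalIntegral.continuous_primitive (fun a b => gDens_cont.intervalIntegrable a b) 0)

lemma gDens_lt {t : ℝ} (ht : t ≠ 0) : gDens t < (Real.sqrt (2 * Real.pi))⁻¹ := by
  have h1 : Real.exp (-t ^ 2 / 2) < 1 := by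
    rw [Real.exp_lt_one_iff]
    have : 0 < t ^ 2 := by positivity
    linarith
  have h2 := inv_pos.2 sqrt_pos_aux
  unfold gDens
  nlinarith

lemma gDens_le (t : ℝ) : gDens t ≤ (Real.sqrt (2 * Real.pi))⁻¹ := by
  rcases eq_or_ne t 0 with rfl | h
  · simp [gDens]
  · exact (gDens_lt h).le

lemma cdf_sub_lt {x y : ℝ} (h : x < y) :
    stdNormalCDF y - stdNormalCDF x < (Real.sqrt (2 * Real.pi))⁻¹ * (y - x) := by
  have key : ∫ t in x..y, gDens t < ∫ _t in x..y, (Real.sqrt (2 * Real.pi))⁻¹ := by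
    apply intervalIntegral.integral_lt_integral_of_continuousOn_of_le_of_exists_lt h
      gDens_cont.continuousOn continuousOn_const (fun t _ => gDens_le t)
    rcases eq_or_ne x 0 with hx | hx
    · exact ⟨y, ⟨h.le, le_rfl⟩, gDens_lt (by linarith : 0 < y).ne'⟩
    · exact ⟨x, ⟨le_rfl, h.le⟩, gDens_lt hx⟩
  rw [cdf_sub]
  rw [intervalIntegral.integral_const, smul_eq_mul, mul_comm] at key
  exact key

lemma no_two (k : ℝ) (hk0 : 0 ≤ k) (hk1 : k ≤ Real.sqrt (2 * Real.pi)) (b x y : ℝ)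
    (hx : stdNormalCDF (k * x + b) = x) (hy : stdNormalCDF (k * y + b) = y) : ¬ x < y := by
  intro h
  rcases hk0.eq_or_lt with rfl | hk
  · simp only [zero_mul] at hx hy
    linarith
  · have h1 : k * x + b < k * y + b := by nlinarith
    have h2 := cdf_sub_lt h1
    rw [hx, hy] at h2
    have h3 : (Real.sqrt (2 * Real.pi))⁻¹ * k ≤ 1 := by
      rw [inv_mul_le_iff₀ sqrt_pos_aux]; linarith
    nlinarith

theorem stmt_0 (k : ℝ) (hk0 : 0 ≤ k) (hk1 : k ≤ Real.sqrt (2 * Real.pi)) (b : ℝ) :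
    ∃ θ ∈ Set.Ioo (0 : ℝ) 1, stdNormalCDF (k * θ + b) = θ ∧
      ∀ θ' : ℝ, stdNormalCDF (k * θ' + b) = θ' → θ' = θ := by
  have hc : Continuous (fun θ : ℝ => θ - stdNormalCDF (k * θ + b)) :=
    continuous_id.sub (cdf_cont.comp (by fun_prop))
  have hm : (0:ℝ) ∈ Set.Ioo ((fun θ : ℝ => θ - stdNormalCDF (k * θ + b)) 0)
      ((fun θ : ℝ => θ - stdNormalCDF (k * θ + b)) 1) := by
    constructor
    · have := cdf_pos (k * 0 + b)
      show 0 - stdNormalCDF (k * 0 + b) < 0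
      linarith
    · have := cdf_lt_one (k * 1 + b)
      show 0 < 1 - stdNormalCDF (k * 1 + b)
      linarith
  obtain ⟨θ, hθ, he⟩ := intermediate_value_Ioo zero_le_one hc.continuousOn hm
  have he' : stdNormalCDF (k * θ + b) = θ := (sub_eq_zero.1 he).symm
  refine ⟨θ, hθ, he', fun θ' h' => ?_⟩
  exact le_antisymm (not_lt.1 (no_two k hk0 hk1 b _ _ he' h'))
    (not_lt.1 (no_two k hk0 hk1 b _ _ h' he'))
end

section
/- Fix α_x > 0, α_p > 0. (i) For every σ_μ ≥ 0 there exists ε₀ > 0 such that for all σ_ε with 0 < σ_ε < ε₀, setting α_z = α_x²/(σ_ε²·(α_x + α_p²·σ_μ²)), we have 1/√(2π) ≤ ((α_x + α_z)/α_x)·√(α_x/α_p² + σ_μ²). (ii) For every σ_ε > 0 there exists M > 0 such that for all σ_μ > M, setting α_z = α_x²/(σ_ε²·(α_x + α_p²·σ_μ²)), we have 1/√(2π) ≤ ((α_x + α_z)/α_x)·√(α_x/α_p² + σ_μ²). -/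
theorem aux_pi : 1 / Real.sqrt (2 * Real.pi) ≤ 1 := by
  have h : 1 ≤ Real.sqrt (2 * Real.pi) := by
    rw [Real.one_le_sqrt]
    linarith [Real.pi_gt_three]
  rw [div_le_one (by linarith)]
  exact h

theorem stmt_12 (αx αp : ℝ) (hαx : 0 < αx) (hαp : 0 < αp) :
    (∀ σμ : ℝ, 0 ≤ σμ →
      ∃ ε₀ > (0 : ℝ), ∀ σε : ℝ, 0 < σε → σε < ε₀ →
        1 / Real.sqrt (2 * Real.pi) ≤
          ((αx + αx ^ 2 / (σε ^ 2 * (αx + αp ^ 2 * σμ ^ 2))) / αx) *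
            Real.sqrt (αx / αp ^ 2 + σμ ^ 2)) ∧
    (∀ σε : ℝ, 0 < σε →
      ∃ M > (0 : ℝ), ∀ σμ : ℝ, σμ > M →
        1 / Real.sqrt (2 * Real.pi) ≤
          ((αx + αx ^ 2 / (σε ^ 2 * (αx + αp ^ 2 * σμ ^ 2))) / αx) *
            Real.sqrt (αx / αp ^ 2 + σμ ^ 2)) := by
  constructor
  · intro σμ _
    have hB : 0 < αx + αp ^ 2 * σμ ^ 2 := by positivity
    have hS : 0 < Real.sqrt (αx / αp ^ 2 + σμ ^ 2) := by positivity
    generalize αx + αp ^ 2 * σμ ^ 2 = B at *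
    generalize Real.sqrt (αx / αp ^ 2 + σμ ^ 2) = S at *
    refine ⟨Real.sqrt (αx * S / B), by positivity, fun σε h0 h1 => aux_pi.trans ?_⟩
    rw [Real.lt_sqrt h0.le, lt_div_iff₀ hB] at h1
    have hD : 0 < σε ^ 2 * B := by positivity
    have e : (αx + αx ^ 2 / (σε ^ 2 * B)) / αx * S = S + αx * S / (σε ^ 2 * B) := by
      field_simp
    rw [e]
    have : 1 ≤ αx * S / (σε ^ 2 * B) := by
      rw [one_le_div hD]
      exact h1.le
    linarith
  · intro σε h0
    refine ⟨1, one_pos, fun σμ h1 => aux_pi.trans ?_⟩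
    have hS : 1 ≤ Real.sqrt (αx / αp ^ 2 + σμ ^ 2) := by
      rw [Real.one_le_sqrt]
      have : 0 < αx / αp ^ 2 := by positivity
      nlinarith
    have hF : 1 ≤ (αx + αx ^ 2 / (σε ^ 2 * (αx + αp ^ 2 * σμ ^ 2))) / αx := by
      rw [one_le_div hαx]
      have : 0 ≤ αx ^ 2 / (σε ^ 2 * (αx + αp ^ 2 * σμ ^ 2)) := by positivity
      linarith
    exact one_le_mul_of_one_le_of_one_le hF hS
end

section
/- Let α_x > 0, α_p > 0, α_z ≥ 0, σ_μ ≥ 0 and set B = √(α_x + α_p²·σ_μ²). If 1/√(2π) < √(α_x/(α_p + α_z)² + σ_μ²/(1 + α_z/α_p)²), then for every y ∈ ℝ: (i) −(α_p + α_z)·φ(y) + B > 0; (ii) φ(y)·α_p·α_x/B − (α_x + α_z) < 0; and hence (iii) the quotient (−(α_p + α_z)·φ(y) + B)/(φ(y)·α_p·α_x/B − (α_x + α_z)) is strictly negative. -/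
/-- The standard normal density `φ(x) = (2π)^{-1/2} exp(-x²/2)`. -/
noncomputable def stdNormalPDF (x : ℝ) : ℝ :=
  (Real.sqrt (2 * Real.pi))⁻¹ * Real.exp (-x ^ 2 / 2)

theorem stmt_13 (αx αp αz σμ : ℝ) (hαx : 0 < αx) (hαp : 0 < αp) (hαz : 0 ≤ αz)
    (hσμ : 0 ≤ σμ) (B : ℝ) (hB : B = Real.sqrt (αx + αp ^ 2 * σμ ^ 2))
    (h : 1 / Real.sqrt (2 * Real.pi) <
      Real.sqrt (αx / (αp + αz) ^ 2 + σμ ^ 2 / (1 + αz / αp) ^ 2)) :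
    ∀ y : ℝ,
      0 < -(αp + αz) * stdNormalPDF y + B ∧
      stdNormalPDF y * αp * αx / B - (αx + αz) < 0 ∧
      (-(αp + αz) * stdNormalPDF y + B) /
        (stdNormalPDF y * αp * αx / B - (αx + αz)) < 0 := by
  intro y
  have hs : 0 < αp + αz := by linarith
  have hR : 0 < αx + αp ^ 2 * σμ ^ 2 := by positivity
  have hBpos : 0 < B := by rw [hB]; exact Real.sqrt_pos.mpr hR
  have key : αx / (αp + αz) ^ 2 + σμ ^ 2 / (1 + αz / αp) ^ 2
      = (αx + αp ^ 2 * σμ ^ 2) / (αp + αz) ^ 2 := by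
    have h1 : 1 + αz / αp = (αp + αz) / αp := by field_simp
    rw [h1]
    field_simp
  rw [key, Real.sqrt_div hR.le, Real.sqrt_sq hs.le, ← hB, one_div] at h
  have hφ0 : 0 < stdNormalPDF y := by
    unfold stdNormalPDF
    positivity
  have hφ : stdNormalPDF y ≤ (Real.sqrt (2 * Real.pi))⁻¹ := by
    unfold stdNormalPDF
    apply mul_le_of_le_one_right (by positivity)
    rw [Real.exp_le_one_iff]
    nlinarith [sq_nonneg y]
  have h2 : stdNormalPDF y * (αp + αz) < B :=
    (lt_div_iff₀ hs).mp (lt_of_le_of_lt hφ h)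
  have h3 : 0 < -(αp + αz) * stdNormalPDF y + B := by linarith
  have h4 : stdNormalPDF y * αp * αx / B - (αx + αz) < 0 := by
    have h5 : stdNormalPDF y * αp < B := by nlinarith [mul_nonneg hφ0.le hαz]
    have h6 : stdNormalPDF y * αp * αx / B < αx := by
      rw [div_lt_iff₀ hBpos]
      nlinarith
    linarith
  exact ⟨h3, h4, div_neg_of_pos_of_neg h3 h4⟩
end

section
/- Fix α_x > 0, α_p > 0, σ_ε > 0, and for σ_μ ≥ 0 set α_z(σ_μ) = α_x²/(σ_ε²·(α_x + α_p²·σ_μ²)). There exists M > 0 such that for all σ_μ > M, both 1/√(2π) < ((α_x + α_z(σ_μ))/α_x)·√(α_x/α_p² + σ_μ²) and 1/√(2π) < √(α_x/(α_p + α_z(σ_μ))² + σ_μ²/(1 + α_z(σ_μ)/α_p)²) hold. -/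
theorem stmt_15 (αx αp σε : ℝ) (hαx : 0 < αx) (hαp : 0 < αp) (hσε : 0 < σε) :
    ∃ M > (0 : ℝ), ∀ σμ : ℝ, σμ > M →
      1 / Real.sqrt (2 * Real.pi) <
        ((αx + αx ^ 2 / (σε ^ 2 * (αx + αp ^ 2 * σμ ^ 2))) / αx) *
          Real.sqrt (αx / αp ^ 2 + σμ ^ 2) ∧
      1 / Real.sqrt (2 * Real.pi) <
        Real.sqrt (αx / (αp + αx ^ 2 / (σε ^ 2 * (αx + αp ^ 2 * σμ ^ 2))) ^ 2 +
          σμ ^ 2 / (1 + (αx ^ 2 / (σε ^ 2 * (αx + αp ^ 2 * σμ ^ 2))) / αp) ^ 2) := by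
  have hk : 1 / Real.sqrt (2 * Real.pi) < 1 := by
    have h1 : 1 < Real.sqrt (2 * Real.pi) := by
      rw [Real.lt_sqrt (by norm_num)]
      linarith [Real.pi_gt_three]
    rw [div_lt_one (by linarith)]
    exact h1
  refine ⟨1 + (αx / σε ^ 2) / αp, by positivity, ?_⟩
  intro σμ hσ
  have hz0 : 0 < αx ^ 2 / (σε ^ 2 * (αx + αp ^ 2 * σμ ^ 2)) := by positivity
  have hzc : αx ^ 2 / (σε ^ 2 * (αx + αp ^ 2 * σμ ^ 2)) ≤ αx / σε ^ 2 := by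
    rw [div_le_div_iff₀ (by positivity) (by positivity)]
    have : 0 ≤ αx * σε ^ 2 * (αp ^ 2 * σμ ^ 2) := by positivity
    nlinarith
  generalize αx ^ 2 / (σε ^ 2 * (αx + αp ^ 2 * σμ ^ 2)) = z at hz0 hzc ⊢
  have hzp : z / αp ≤ (αx / σε ^ 2) / αp := by gcongr
  have hzp0 : 0 < z / αp := by positivity
  constructor
  · have h1 : 1 ≤ (αx + z) / αx := by
      rw [le_div_iff₀ hαx]; linarith
    have h2 : 1 ≤ Real.sqrt (αx / αp ^ 2 + σμ ^ 2) := by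
      apply Real.one_le_sqrt.2
      have : 0 < αx / αp ^ 2 := by positivity
      nlinarith
    nlinarith
  · refine lt_of_lt_of_le hk (Real.one_le_sqrt.2 ?_)
    have h1 : 0 < αx / (αp + z) ^ 2 := by positivity
    have h2 : 1 ≤ σμ ^ 2 / (1 + z / αp) ^ 2 := by
      rw [le_div_iff₀ (by positivity), one_mul]
      exact pow_le_pow_left₀ (by positivity) (by linarith) 2
    linarith
end

section
/- Fix α_x > 0, α_p > 0, σ_μ ≥ 0, and for σ_ε > 0 set α_z(σ_ε) = α_x²/(σ_ε²·(α_x + α_p²·σ_μ²)). Then the function σ_ε ↦ √(α_x/(α_p + α_z(σ_ε))² + σ_μ²/(1 + α_z(σ_ε)/α_p)²) tends to 0 as σ_ε tends to 0 from the right; in particular, for all sufficiently small σ_ε > 0 this quantity is strictly less than 1/√(2π). -/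
open Filter Topology

theorem stmt_16 (αx αp σμ : ℝ) (hαx : 0 < αx) (hαp : 0 < αp) (hσμ : 0 ≤ σμ) :
    Tendsto (fun σε : ℝ =>
        Real.sqrt (αx / (αp + αx ^ 2 / (σε ^ 2 * (αx + αp ^ 2 * σμ ^ 2))) ^ 2 +
          σμ ^ 2 / (1 + (αx ^ 2 / (σε ^ 2 * (αx + αp ^ 2 * σμ ^ 2))) / αp) ^ 2))
      (𝓝[>] (0 : ℝ)) (𝓝 0) ∧
    ∃ ε₀ > (0 : ℝ), ∀ σε : ℝ, 0 < σε → σε < ε₀ →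
      Real.sqrt (αx / (αp + αx ^ 2 / (σε ^ 2 * (αx + αp ^ 2 * σμ ^ 2))) ^ 2 +
          σμ ^ 2 / (1 + (αx ^ 2 / (σε ^ 2 * (αx + αp ^ 2 * σμ ^ 2))) / αp) ^ 2) <
        1 / Real.sqrt (2 * Real.pi) := by
  have hc : 0 < αx + αp ^ 2 * σμ ^ 2 := by positivity
  have hz : Tendsto (fun σε : ℝ => αx ^ 2 / (σε ^ 2 * (αx + αp ^ 2 * σμ ^ 2)))
      (𝓝[>] (0 : ℝ)) atTop := by
    have h0 : Tendsto (fun σε : ℝ => σε ^ 2 * (αx + αp ^ 2 * σμ ^ 2)) (𝓝[>] (0 : ℝ))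
        (𝓝[>] (0 : ℝ)) := by
      refine tendsto_nhdsWithin_iff.2 ⟨?_, ?_⟩
      · have h : Continuous (fun σε : ℝ => σε ^ 2 * (αx + αp ^ 2 * σμ ^ 2)) := by fun_prop
        have h2 := h.tendsto 0
        simp only [ne_eq, OfNat.ofNat_ne_zero, not_false_eq_true, zero_pow, zero_mul] at h2
        exact h2.mono_left nhdsWithin_le_nhds
      · filter_upwards [self_mem_nhdsWithin] with x hx
        have hx' : (0 : ℝ) < x := hx
        exact Set.mem_Ioi.2 (by positivity)
    have h1 := (tendsto_inv_nhdsGT_zero.comp h0).const_mul_atTop (show 0 < αx ^ 2 by positivity)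
    simpa only [div_eq_mul_inv, Function.comp_def] using h1
  have hlim : Tendsto (fun σε : ℝ =>
        Real.sqrt (αx / (αp + αx ^ 2 / (σε ^ 2 * (αx + αp ^ 2 * σμ ^ 2))) ^ 2 +
          σμ ^ 2 / (1 + (αx ^ 2 / (σε ^ 2 * (αx + αp ^ 2 * σμ ^ 2))) / αp) ^ 2))
      (𝓝[>] (0 : ℝ)) (𝓝 0) := by
    have ha := ((tendsto_pow_atTop two_ne_zero).comp
      (tendsto_atTop_add_const_left _ αp hz)).const_div_atTop αx
    have hb := ((tendsto_pow_atTop two_ne_zero).comp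
      (tendsto_atTop_add_const_left _ 1 (hz.atTop_div_const hαp))).const_div_atTop (σμ ^ 2)
    have h := (ha.add hb).sqrt
    simpa only [Function.comp_def, add_zero, Real.sqrt_zero] using h
  refine ⟨hlim, ?_⟩
  have hpos : 0 < 1 / Real.sqrt (2 * Real.pi) := by
    have := Real.pi_pos
    positivity
  have hev := hlim.eventually_lt_const hpos
  obtain ⟨u, hu, hsub⟩ := mem_nhdsGT_iff_exists_Ioo_subset.1 hev
  exact ⟨u, hu, fun x h1 h2 => hsub ⟨h1, h2⟩⟩
end
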